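/- Let G be a chain graph with chain components 𝒯 and let ≺ be a strict total order of 𝒯 consistent with G. A strictly positive joint probability mass function p obeys the multivariate regression Markov property for G if and only if for every T ∈ 𝒯 and every nonempty A ⊆ T the conditional multivariate logistic contrasts of p_{A|pre(T)} satisfy: (i) if A is connected, η^{(A)}(i*_A | i_{pre(T)}) depends on i_{pre(T)} only through the subvector i_{pa_G(A)} (equivalently, η^{(A)}(i*_A | i_{pre(T)}) = Σ_{b ⊆ pa_G(A)} β^{(A)}_b(i*_A, i_b) for baseline-coded functions β^{(A)}_b); and (ii) if A is disconnected, η^{(A)}(i*_A | i_{pre(T)}) = 0 for all i*_A and all i_{pre(T)}. -/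

import Mathlib

open scoped Classical BigOperators

/-- A mixed graph on a node set `V`: a set of directed edges and a symmetric
irreflexive set of undirected edges, the two edge sets being disjoint. -/
structure MixedGraph (V : Type*) where
  dir : V → V → Prop
  undir : V → V → Prop
  undir_symm : ∀ {a b}, undir a b → undir b a
  undir_irrefl : ∀ a, ¬ undir a a
  edge_disjoint : ∀ a b, dir a b → ¬ undir a b

namespace MixedGraph

variable {V : Type*} [Fintype V] [DecidableEq V] (G : MixedGraph V)

/-- One step of a semi-directed path: an undirected edge or a directed edge
followed in the direction of traversal. -/
def step (a b : V) : Prop := G.dir a b ∨ G.undir a b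

/-- No semi-directed cycle: there is no directed edge `a → b` together with a
semi-directed path from `b` back to `a`. -/
def NoSemiDirectedCycle : Prop :=
  ∀ a b : V, G.dir a b → ¬ Relation.ReflTransGen G.step b a

/-- Two nodes are in the same chain component iff they are joined by a path of
undirected edges (the equivalence relation generated by the undirected part). -/
def sameComp (a b : V) : Prop := Relation.ReflTransGen G.undir a b

/-- The chain component of a node. -/
noncomputable def component (v : V) : Finset V :=
  Finset.univ.filter fun w => G.sameComp v w

/-- `T` is a chain component of `G`. -/
def IsComponent (T : Finset V) : Prop := ∃ v, T = G.component v

/-- The collection of chain components of `G`. -/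
noncomputable def componentsF : Finset (Finset V) :=
  Finset.univ.image fun v => G.component v

/-- The parents `pa_G(A)`: nodes outside `A` with a directed edge into `A`. -/
noncomputable def paG (A : Finset V) : Finset V :=
  Finset.univ.filter fun w => w ∉ A ∧ ∃ v ∈ A, G.dir w v

/-- The (inclusive) neighbours `Nb_G(A)`: `A` together with all nodes joined to
`A` by an undirected edge. -/
noncomputable def nbG (A : Finset V) : Finset V :=
  A ∪ Finset.univ.filter fun w => ∃ v ∈ A, G.undir v w

/-- The edge relation of the directed graph `D` of chain components:
`T₁ → T₂` iff they are distinct chain components and `G` has a directed edge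
from a node of `T₁` to a node of `T₂`. -/
def dirD (T₁ T₂ : Finset V) : Prop :=
  G.IsComponent T₁ ∧ G.IsComponent T₂ ∧ T₁ ≠ T₂ ∧ ∃ v ∈ T₁, ∃ w ∈ T₂, G.dir v w

/-- `pa_D(T)`: the union of the parent components of `T` in `D`. -/
noncomputable def paD (T : Finset V) : Finset V :=
  Finset.univ.filter fun w => G.dirD (G.component w) T

/-- `nd_D(T)`: the union of the components `T'` such that there is no directed
path from `T` to `T'` in `D`. -/
noncomputable def ndD (T : Finset V) : Finset V :=
  Finset.univ.filter fun w => ¬ Relation.ReflTransGen G.dirD T (G.component w)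

/-- A set of nodes `A` is connected if the subgraph of the undirected part of
`G` induced by `A` is connected (in particular nonempty). -/
def ConnectedIn (A : Finset V) : Prop :=
  A.Nonempty ∧ ∀ a ∈ A, ∀ b ∈ A,
    Relation.ReflTransGen (fun x y => x ∈ A ∧ y ∈ A ∧ G.undir x y) a b

/-- The connected component of `v` inside the induced subgraph on `A`. -/
noncomputable def compIn (A : Finset V) (v : V) : Finset V :=
  A.filter fun w =>
    Relation.ReflTransGen (fun x y => x ∈ A ∧ y ∈ A ∧ G.undir x y) v w

/-- The set of connected components of the induced subgraph on `A`. -/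
noncomputable def connComps (A : Finset V) : Finset (Finset V) :=
  A.image fun v => G.compIn A v

/-- `ord` is a strict total order of the chain components consistent with `G`:
`ord T T'` implies that `T` is not a parent component of `T'`. -/
def ConsistentOrder (ord : Finset V → Finset V → Prop) : Prop :=
  (∀ T₁ T₂, G.IsComponent T₁ → G.IsComponent T₂ → T₁ ≠ T₂ →
      ord T₁ T₂ ∨ ord T₂ T₁) ∧
  (∀ T, G.IsComponent T → ¬ ord T T) ∧
  (∀ T₁ T₂ T₃, G.IsComponent T₁ → G.IsComponent T₂ → G.IsComponent T₃ →
      ord T₁ T₂ → ord T₂ T₃ → ord T₁ T₃) ∧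
  (∀ T₁ T₂, G.IsComponent T₁ → G.IsComponent T₂ → ord T₁ T₂ → ¬ G.dirD T₁ T₂)

/-- `pre(T)`: the union of all the chain components `T'` with `T ≺ T'`
(the predecessors, i.e. the past, of `T`). -/
noncomputable def pre (ord : Finset V → Finset V → Prop) (T : Finset V) :
    Finset V :=
  Finset.univ.filter fun w => ord T (G.component w)

end MixedGraph

/-- A cell of the joint contingency table: variable `v` takes one of the
levels `0, …, r v - 1` (level `0` playing the role of the first level `1`). -/
abbrev Cell {V : Type*} (r : V → ℕ) := ∀ v : V, Fin (r v)

variable {V : Type*} [Fintype V] [DecidableEq V] {r : V → ℕ}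

/-- The marginal probability `p_S(i_S)` (as a function of a full cell `i`,
depending on it only through the coordinates in `S`). -/
noncomputable def marginal (p : Cell r → ℝ) (S : Finset V) (i : Cell r) : ℝ :=
  ∑ j : Cell r, if ∀ v ∈ S, j v = i v then p j else 0

/-- The conditional probability `p_{A|B}(i_A | i_B)`. -/
noncomputable def condProb (p : Cell r → ℝ) (A B : Finset V) (i : Cell r) : ℝ :=
  marginal p (A ∪ B) i / marginal p B i

/-- `p` is a strictly positive joint probability mass function. -/
def IsPosPMF (p : Cell r → ℝ) : Prop :=
  (∀ i, 0 < p i) ∧ ∑ i : Cell r, p i = 1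

/-- Conditional independence `A ⊥ B | C`. -/
def CondIndep (p : Cell r → ℝ) (A B C : Finset V) : Prop :=
  ∀ i : Cell r,
    marginal p (A ∪ B ∪ C) i * marginal p C i =
      marginal p (A ∪ C) i * marginal p (B ∪ C) i

/-- The cell agreeing with `i` on `S` and equal to the first (reference)
level outside `S`. -/
def splice (hr : ∀ v, 2 ≤ r v) (S : Finset V) (i : Cell r) : Cell r :=
  fun v => if v ∈ S then i v else ⟨0, by have := hr v; omega⟩

/-- The conditional multivariate logistic contrast
`η^{(A)}(i_A | i_B) = Σ_{s ⊆ A} (−1)^{|A∖s|} log p_{A|B}((i_s, 1_{A∖s}) | i_B)`. -/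
noncomputable def mlContrast (hr : ∀ v, 2 ≤ r v) (p : Cell r → ℝ)
    (A B : Finset V) (i : Cell r) : ℝ :=
  ∑ s ∈ A.powerset,
    (-1 : ℝ) ^ (A \ s).card * Real.log (condProb p A B (splice hr (s ∪ B) i))

/-- The multivariate regression (MR) Markov property for the chain graph `G`
with respect to the consistent ordering `ord`: for every chain component `T`
and every nonempty `A ⊆ T`, (MR1) if `A` is connected then
`A ⊥ (pre(T)∖pa_G(A)) | pa_G(A)`, and (MR2) if `A` is disconnected then its
connected components are mutually independent given `pre(T)`. -/
def MRMarkov (G : MixedGraph V) (ord : Finset V → Finset V → Prop)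
    (p : Cell r → ℝ) : Prop :=
  ∀ T : Finset V, G.IsComponent T → ∀ A ⊆ T, A.Nonempty →
    (G.ConnectedIn A →
      CondIndep p A (G.pre ord T \ G.paG A) (G.paG A)) ∧
    (¬ G.ConnectedIn A →
      ∀ i : Cell r,
        condProb p A (G.pre ord T) i =
          ∏ Aj ∈ G.connComps A, condProb p Aj (G.pre ord T) i)

/-- The block-recursive Markov property of type IV for the chain graph `G`:
(IV0) `T ⊥ (nd_D(T)∖pa_D(T)) | pa_D(T)`;
(IV1) `A ⊥ (pa_D(T)∖pa_G(A)) | pa_G(A)` for all `A ⊆ T`;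
(IV2) `A ⊥ (T∖Nb_G(A)) | pa_D(T)` for all connected `A ⊆ T`. -/
def TypeIVMarkov (G : MixedGraph V) (p : Cell r → ℝ) : Prop :=
  (∀ T : Finset V, G.IsComponent T →
      CondIndep p T (G.ndD T \ G.paD T) (G.paD T)) ∧
  (∀ T : Finset V, G.IsComponent T → ∀ A ⊆ T,
      CondIndep p A (G.paD T \ G.paG A) (G.paG A)) ∧
  (∀ T : Finset V, G.IsComponent T → ∀ A ⊆ T, G.ConnectedIn A →
      CondIndep p A (T \ G.nbG A) (G.paD T))

/-! The conditional probabilities `p_{A|B}`, for `A` ranging over the subsets of a block, are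
determined by the contrasts `η^{(A)}`, by induction on `A`. If `f` and `g` are positive functions
of the cell with equal sums over each single coordinate in `A`, then `f - g` is orthogonal to
every function that ignores some coordinate in `A`, and modulo such functions `log f - log g` is
its own contrast. Equal contrasts thus give `∑ (f - g) * (log f - log g) = 0`, where all terms are
nonnegative, so `f = g`. Take `f = p_{A|B}`, the induction hypothesis providing the equality of
the sums, and for `g` either `f` with the coordinates outside `A ∪ pa_G(A)` frozen, or the product
of the `p_{C|B}` over the connected components `C` of `A`, whose contrast vanishes because no
factor involves all of `A`. -/

section FunctionsOnProducts

variable {ι : Type*} {α : ι → Type*} {R : Type*}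

theorem apply_update_eq_of_dependsOn {β : Type*} [DecidableEq ι] {f : (∀ w, α w) → β} {S : Set ι}
    (hf : DependsOn f S) {v : ι} (hv : v ∉ S) (i : ∀ w, α w) (x : α v) :
    f (Function.update i v x) = f i :=
  hf fun _ hw => Function.update_of_ne (ne_of_mem_of_not_mem hw hv) _ _

theorem sum_mul_eq_zero_of_dependsOn [Fintype ι] [DecidableEq ι] [∀ w, Fintype (α w)]
    [NonUnitalNonAssocSemiring R] {d h : (∀ w, α w) → R} {S : Set ι} {v : ι} (hv : v ∉ S)
    (hd : ∀ i, ∑ x, d (Function.update i v x) = 0) (hh : DependsOn h S) :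
    ∑ i, d i * h i = 0 := by
  rw [← (Equiv.piSplitAt v α).symm.sum_comp, Fintype.sum_prod_type_right]
  refine Finset.sum_eq_zero fun y _ => ?_
  rcases isEmpty_or_nonempty (α v) with _ | ⟨⟨x₀⟩⟩
  · exact Fintype.sum_empty _
  set k := (Equiv.piSplitAt v α).symm (x₀, y)
  have hk : ∀ x, (Equiv.piSplitAt v α).symm (x, y) = Function.update k v x := by
    intro x
    funext w
    by_cases hw : w = v
    · subst hw
      simp [Equiv.piSplitAt]
    · simp [k, Equiv.piSplitAt, hw]
  simp only [hk, apply_update_eq_of_dependsOn hh hv]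
  rw [← Finset.sum_mul, hd, zero_mul]

theorem sum_powerset_neg_one_pow_card_sdiff_mul_eq_zero [DecidableEq ι] [Ring R] {A : Finset ι}
    {v : ι} (hv : v ∈ A) {H : Finset ι → R} (hH : ∀ s, H (insert v s) = H s) :
    ∑ s ∈ A.powerset, (-1) ^ (A \ s).card * H s = 0 := by
  rw [← Finset.insert_erase hv, Finset.sum_powerset_insert (Finset.notMem_erase v A),
    ← Finset.sum_add_distrib, Finset.insert_erase hv]
  refine Finset.sum_eq_zero fun s hs => ?_
  have hvs : v ∈ A \ s :=
    Finset.mem_sdiff.2 ⟨hv, fun h => by simpa using Finset.mem_powerset.1 hs h⟩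
  rw [hH, Finset.sdiff_insert, ← Finset.card_erase_add_one hvs, pow_succ]
  noncomm_ring

end FunctionsOnProducts

section Marginals

variable {p : Cell r → ℝ} {A B P S : Finset V} {v : V}

theorem dependsOn_marginal (p : Cell r → ℝ) (S : Finset V) : DependsOn (marginal p S) ↑S := by
  intro i j hij
  refine Finset.sum_congr rfl fun k _ => ?_
  have hk : (∀ v ∈ S, k v = i v) ↔ ∀ v ∈ S, k v = j v :=
    forall₂_congr fun v hv => by rw [hij v hv]
  simp only [hk]

theorem marginal_pos (hp : ∀ i, 0 < p i) (S : Finset V) (i : Cell r) : 0 < marginal p S i :=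
  Finset.sum_pos' (fun j _ => by split_ifs <;> simp [(hp j).le])
    ⟨i, Finset.mem_univ _, by simp [hp i]⟩

theorem sum_marginal_update (hv : v ∈ S) (i : Cell r) :
    ∑ x, marginal p S (Function.update i v x) = marginal p (S.erase v) i := by
  have hsplit : ∀ (j : Cell r) (x : Fin (r v)), (∀ w ∈ S, j w = Function.update i v x w) ↔
      j v = x ∧ ∀ w ∈ S.erase v, j w = i w := by
    intro j x
    conv_lhs => rw [← Finset.insert_erase hv, Finset.forall_mem_insert, Function.update_self]
    exact and_congr_right fun _ => forall₂_congr fun w hw => by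
      rw [Function.update_of_ne (Finset.ne_of_mem_erase hw)]
  unfold marginal
  rw [Finset.sum_comm]
  refine Finset.sum_congr rfl fun j _ => ?_
  simp only [hsplit, ite_and, Finset.sum_ite_eq, Finset.mem_univ, if_true]

theorem dependsOn_condProb (p : Cell r → ℝ) (A B : Finset V) :
    DependsOn (condProb p A B) ↑(A ∪ B) := fun _ _ hij =>
  congrArg₂ (· / ·) (dependsOn_marginal p _ hij)
    (dependsOn_marginal p _ fun v hv => hij v (Finset.mem_union_right _ hv))

theorem condProb_pos (hp : ∀ i, 0 < p i) (A B : Finset V) (i : Cell r) : 0 < condProb p A B i :=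
  div_pos (marginal_pos hp _ _) (marginal_pos hp _ _)

theorem condProb_empty (hp : ∀ i, 0 < p i) (B : Finset V) (i : Cell r) : condProb p ∅ B i = 1 := by
  rw [condProb, Finset.empty_union, div_self (marginal_pos hp _ _).ne']

theorem condProb_update_of_notMem (hA : v ∉ A) (hB : v ∉ B) (i : Cell r) (x : Fin (r v)) :
    condProb p A B (Function.update i v x) = condProb p A B i :=
  apply_update_eq_of_dependsOn (dependsOn_condProb p A B) (by simp [hA, hB]) i x

theorem sum_condProb_update (hA : v ∈ A) (hB : v ∉ B) (i : Cell r) :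
    ∑ x, condProb p A B (Function.update i v x) = condProb p (A.erase v) B i := by
  have hmarg : ∀ x, marginal p B (Function.update i v x) = marginal p B i :=
    apply_update_eq_of_dependsOn (dependsOn_marginal p B) (Finset.mem_coe.not.2 hB) i
  simp only [condProb, hmarg]
  rw [← Finset.sum_div, sum_marginal_update (Finset.mem_union_left _ hA),
    Finset.erase_union_distrib, Finset.erase_eq_of_notMem hB]

theorem marginal_union_sdiff_of_dependsOn_condProb (hp : ∀ i, 0 < p i) (hAB : Disjoint A B)
    (h : DependsOn (condProb p A B) ↑(A ∪ P)) {D : Finset V} (hDB : D ⊆ B) (hDP : Disjoint D P)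
    (i : Cell r) :
    marginal p (A ∪ B \ D) i = condProb p A B i * marginal p (B \ D) i := by
  induction D using Finset.induction_on generalizing i with
  | empty => rw [Finset.sdiff_empty, condProb, div_mul_cancel₀ _ (marginal_pos hp _ _).ne']
  | insert v D hvD ih =>
    rw [Finset.insert_subset_iff] at hDB
    rw [Finset.disjoint_insert_left] at hDP
    have hvA : v ∉ A := Finset.disjoint_right.1 hAB hDB.1
    have hvBD : v ∈ B \ D := Finset.mem_sdiff.2 ⟨hDB.1, hvD⟩
    have hconst : ∀ x, condProb p A B (Function.update i v x) = condProb p A B i :=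
      apply_update_eq_of_dependsOn h (by simp [hvA, hDP.1]) i
    calc marginal p (A ∪ B \ insert v D) i
        = marginal p ((A ∪ B \ D).erase v) i := by
          rw [Finset.sdiff_insert, Finset.erase_union_distrib, Finset.erase_eq_of_notMem hvA]
      _ = ∑ x, condProb p A B i * marginal p (B \ D) (Function.update i v x) := by
          rw [← sum_marginal_update (Finset.mem_union_right _ hvBD)]
          exact Finset.sum_congr rfl fun x _ => by rw [ih hDB.2 hDP.2, hconst]
      _ = condProb p A B i * marginal p (B \ insert v D) i := by
          rw [← Finset.mul_sum, sum_marginal_update hvBD, Finset.sdiff_insert]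

theorem condIndep_sdiff_iff_dependsOn_condProb (hp : ∀ i, 0 < p i) (hPB : P ⊆ B)
    (hAB : Disjoint A B) :
    CondIndep p A (B \ P) P ↔ DependsOn (condProb p A B) ↑(A ∪ P) := by
  rw [CondIndep, Finset.union_assoc, Finset.sdiff_union_of_subset hPB]
  constructor
  · intro h
    have hcond : condProb p A B = condProb p A P := funext fun i =>
      (div_eq_div_iff (marginal_pos hp _ _).ne' (marginal_pos hp _ _).ne').2 (h i)
    exact hcond ▸ dependsOn_condProb p A P
  · intro h i
    have hAP := marginal_union_sdiff_of_dependsOn_condProb hp hAB h Finset.sdiff_subset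
      Finset.sdiff_disjoint i
    rw [Finset.sdiff_sdiff_eq_self hPB] at hAP
    rw [hAP, mul_right_comm, condProb, div_mul_cancel₀ _ (marginal_pos hp _ _).ne', mul_comm]

end Marginals

section Contrasts

variable {hr : ∀ v, 2 ≤ r v} {A B : Finset V} {v : V}

/-- The contrast `Σ_{s ⊆ A} (−1)^{|A∖s|} F(i_s, 1_{A∖s}, i_{V∖A})` of a function `F` of the cell, as
a linear operator. All coordinates outside `A` are kept, so no conditioning set is involved. -/
noncomputable def contrast (hr : ∀ v, 2 ≤ r v) (A : Finset V) : (Cell r → ℝ) →ₗ[ℝ] (Cell r → ℝ) :=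
  ∑ s ∈ A.powerset, (-1 : ℝ) ^ (A \ s).card • LinearMap.funLeft ℝ ℝ (splice hr (s ∪ Aᶜ))

theorem contrast_apply (A : Finset V) (F : Cell r → ℝ) (i : Cell r) :
    contrast hr A F i =
      ∑ s ∈ A.powerset, (-1 : ℝ) ^ (A \ s).card * F (splice hr (s ∪ Aᶜ) i) := by
  simp [contrast, LinearMap.funLeft_apply]

theorem contrast_eq_zero_of_dependsOn {F : Cell r → ℝ} {S : Set V} (hF : DependsOn F S)
    (hvA : v ∈ A) (hvS : v ∉ S) : contrast hr A F = 0 := by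
  funext i
  rw [contrast_apply]
  refine sum_powerset_neg_one_pow_card_sdiff_mul_eq_zero hvA fun s => hF fun w hw => ?_
  simp [splice, ne_of_mem_of_not_mem hw hvS]

theorem contrast_apply_eq_zero_of_level_eq_zero (F : Cell r → ℝ) {i : Cell r} (hv : v ∈ A)
    (hi : (i v : ℕ) = 0) : contrast hr A F i = 0 := by
  rw [contrast_apply]
  refine sum_powerset_neg_one_pow_card_sdiff_mul_eq_zero hv fun s => congrArg F (funext fun w => ?_)
  by_cases hw : w = v
  · subst hw
    simp [splice, hv, Fin.ext_iff, hi]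
  · simp [splice, hw]

theorem contrast_comp_piecewise {S : Finset V} (hAS : A ⊆ S) (F : Cell r → ℝ) (i j : Cell r) :
    contrast hr A (fun k => F (S.piecewise k j)) i = contrast hr A F (S.piecewise i j) := by
  simp only [contrast_apply]
  refine Finset.sum_congr rfl fun s _ => congrArg (_ * F ·) (funext fun v => ?_)
  by_cases hvS : v ∈ S
  · simp [splice, hvS]
  · have hvA : v ∉ A := fun h => hvS (hAS h)
    simp [splice, hvS, hvA]

theorem sum_mul_contrast {d : Cell r → ℝ} (hd : ∀ v ∈ A, ∀ i, ∑ x, d (Function.update i v x) = 0)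
    (F : Cell r → ℝ) : ∑ i, d i * contrast hr A F i = ∑ i, d i * F i := by
  have horth : ∀ s ∈ A.powerset, s ≠ A → ∑ i, d i * F (splice hr (s ∪ Aᶜ) i) = 0 := by
    intro s hs hsA
    obtain ⟨v, hvA, hvs⟩ :=
      Finset.exists_of_ssubset ((Finset.mem_powerset.1 hs).ssubset_of_ne hsA)
    refine sum_mul_eq_zero_of_dependsOn (S := {v}ᶜ) (by simp) (hd v hvA) fun i j hij => ?_
    refine congrArg F (funext fun w => ?_)
    by_cases hw : w = v
    · subst hw
      simp [splice, hvA, hvs]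
    · simp [splice, hij w hw]
  have hsplice : ∀ i, splice hr (A ∪ Aᶜ) i = i := fun i => by
    funext v
    simp [splice]
  calc ∑ i, d i * contrast hr A F i
      = ∑ s ∈ A.powerset, (-1) ^ (A \ s).card * ∑ i, d i * F (splice hr (s ∪ Aᶜ) i) := by
        simp only [contrast_apply, Finset.mul_sum]
        rw [Finset.sum_comm]
        simp only [mul_left_comm]
    _ = (-1) ^ (A \ A).card * ∑ i, d i * F (splice hr (A ∪ Aᶜ) i) :=
        Finset.sum_eq_single_of_mem A (Finset.mem_powerset_self A) fun s hs hsA => by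
          rw [horth s hs hsA, mul_zero]
    _ = ∑ i, d i * F i := by
        simp only [hsplice, Finset.sdiff_self, Finset.card_empty, pow_zero, one_mul]

theorem eq_of_contrast_log_eq {f g : Cell r → ℝ} (hf : ∀ i, 0 < f i) (hg : ∀ i, 0 < g i)
    (hsum : ∀ v ∈ A, ∀ i, ∑ x, f (Function.update i v x) = ∑ x, g (Function.update i v x))
    (hlog : contrast hr A (fun i => Real.log (f i)) = contrast hr A (fun i => Real.log (g i))) :
    f = g := by
  have hzero : ∑ i, (f i - g i) * (Real.log (f i) - Real.log (g i)) = 0 := by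
    calc ∑ i, (f i - g i) * (Real.log (f i) - Real.log (g i))
        = ∑ i, (f i - g i) * contrast hr A (fun k => Real.log (f k) - Real.log (g k)) i :=
          (sum_mul_contrast (d := fun i => f i - g i)
            (fun v hv i => by rw [Finset.sum_sub_distrib, hsum v hv, sub_self]) _).symm
      _ = 0 := by
          rw [show (fun k => Real.log (f k) - Real.log (g k)) =
            (fun k => Real.log (f k)) - fun k => Real.log (g k) from rfl, map_sub, hlog, sub_self]
          simp
  have hnonneg : ∀ i, 0 ≤ (f i - g i) * (Real.log (f i) - Real.log (g i)) := fun i =>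
    (monotoneOn_id.monovaryOn Real.strictMonoOn_log.monotoneOn).sub_mul_sub_nonneg (hg i) (hf i)
  funext i
  have hi := (Finset.sum_eq_zero_iff_of_nonneg fun i _ => hnonneg i).1 hzero i (Finset.mem_univ i)
  rcases mul_eq_zero.1 hi with h | h
  · exact sub_eq_zero.1 h
  · exact Real.log_injOn_pos (hf i) (hg i) (sub_eq_zero.1 h)

end Contrasts

section LogisticContrasts

variable {hr : ∀ v, 2 ≤ r v} {p : Cell r → ℝ} {A B P : Finset V} {v : V}

theorem mlContrast_eq_contrast (hAB : Disjoint A B) :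
    mlContrast hr p A B = contrast hr A (fun i => Real.log (condProb p A B i)) := by
  funext i
  rw [contrast_apply]
  refine Finset.sum_congr rfl fun s _ => congrArg (_ * Real.log ·) (dependsOn_condProb p A B ?_)
  intro v hv
  rcases Finset.mem_union.1 hv with hvA | hvB
  · simp [splice, hvA, Finset.disjoint_left.1 hAB hvA]
  · simp [splice, hvB, Finset.disjoint_right.1 hAB hvB]

theorem mlContrast_apply_eq_zero_of_level_eq_zero (hAB : Disjoint A B) {i : Cell r}
    (hi : ¬ ∀ v ∈ A, (i v : ℕ) ≠ 0) : mlContrast hr p A B i = 0 := by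
  push Not at hi
  obtain ⟨v, hv, hiv⟩ := hi
  rw [mlContrast_eq_contrast hAB, contrast_apply_eq_zero_of_level_eq_zero _ hv hiv]

theorem mlContrast_eq_zero_iff (hAB : Disjoint A B) :
    mlContrast hr p A B = 0 ↔
      ∀ i : Cell r, (∀ v ∈ A, (i v : ℕ) ≠ 0) → mlContrast hr p A B i = 0 := by
  refine ⟨fun h i _ => congrFun h i, fun h => funext fun i => ?_⟩
  by_cases hi : ∀ v ∈ A, (i v : ℕ) ≠ 0
  · exact h i hi
  · exact mlContrast_apply_eq_zero_of_level_eq_zero hAB hi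

theorem dependsOn_mlContrast_iff (hAB : Disjoint A B) :
    DependsOn (mlContrast hr p A B) ↑(A ∪ P) ↔
      ∀ i j : Cell r, (∀ v ∈ A, (i v : ℕ) ≠ 0) →
        (∀ v ∈ A, i v = j v) → (∀ v ∈ P, i v = j v) →
        mlContrast hr p A B i = mlContrast hr p A B j := by
  constructor
  · exact fun h i j _ hA hP => h fun v hv => (Finset.mem_union.1 hv).elim (hA v) (hP v)
  · intro h i j hij
    have hA : ∀ v ∈ A, i v = j v := fun v hv => hij v (Finset.mem_union_left _ hv)
    by_cases hi : ∀ v ∈ A, (i v : ℕ) ≠ 0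
    · exact h i j hi hA fun v hv => hij v (Finset.mem_union_right _ hv)
    · have hj : ¬ ∀ v ∈ A, (j v : ℕ) ≠ 0 := fun hj => hi fun v hv => hA v hv ▸ hj v hv
      rw [mlContrast_apply_eq_zero_of_level_eq_zero hAB hi,
        mlContrast_apply_eq_zero_of_level_eq_zero hAB hj]

theorem dependsOn_mlContrast_of_dependsOn_condProb {S : Set V} (h : DependsOn (condProb p A B) S) :
    DependsOn (mlContrast hr p A B) S := fun i j hij =>
  Finset.sum_congr rfl fun s _ => congrArg (_ * Real.log ·) <| h fun v hv => by
    simp only [splice, hij v hv]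

theorem contrast_log_prod_condProb_eq_zero {ι : Type*} {I : Finset ι} {C : ι → Finset V}
    (hp : ∀ i, 0 < p i) (hAB : Disjoint A B) (hC : ∀ c ∈ I, ¬ A ⊆ C c) :
    contrast hr A (fun i => Real.log (∏ c ∈ I, condProb p (C c) B i)) = 0 := by
  have hlog : (fun i => Real.log (∏ c ∈ I, condProb p (C c) B i)) =
      ∑ c ∈ I, fun i => Real.log (condProb p (C c) B i) := by
    funext i
    rw [Real.log_prod fun c _ => (condProb_pos hp (C c) B i).ne', Finset.sum_apply]
  rw [hlog, map_sum]
  refine Finset.sum_eq_zero fun c hc => ?_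
  obtain ⟨v, hvA, hvC⟩ := Finset.not_subset.1 (hC c hc)
  exact contrast_eq_zero_of_dependsOn (S := ↑(C c ∪ B))
    (fun i j hij => congrArg Real.log (dependsOn_condProb p (C c) B hij)) hvA
    (by simp [hvC, Finset.disjoint_left.1 hAB hvA])

theorem mlContrast_eq_zero_of_condProb_eq_prod {ι : Type*} {I : Finset ι} {C : ι → Finset V}
    (hp : ∀ i, 0 < p i) (hAB : Disjoint A B) (hC : ∀ c ∈ I, ¬ A ⊆ C c)
    (h : ∀ i, condProb p A B i = ∏ c ∈ I, condProb p (C c) B i) : mlContrast hr p A B = 0 := by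
  simp only [mlContrast_eq_contrast hAB, h, contrast_log_prod_condProb_eq_zero hp hAB hC]

theorem dependsOn_condProb_of_dependsOn_mlContrast (hp : ∀ i, 0 < p i) (hAB : Disjoint A B)
    (h : ∀ A' ⊆ A, A'.Nonempty → DependsOn (mlContrast hr p A' B) ↑(A' ∪ P)) :
    DependsOn (condProb p A B) ↑(A ∪ P) := by
  induction A using Finset.strongInduction with
  | H A ih =>
  rcases A.eq_empty_or_nonempty with rfl | hA
  · intro i j _
    rw [condProb_empty hp, condProb_empty hp]
  intro i j hij
  have hagree : ∀ k : Cell r, ∀ v ∈ A ∪ P, (A ∪ P).piecewise k j v = k v := fun k v hv =>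
    Finset.piecewise_eq_of_mem _ _ _ hv
  have hfreeze : condProb p A B = fun k => condProb p A B ((A ∪ P).piecewise k j) := by
    refine eq_of_contrast_log_eq (hr := hr) (A := A) (fun _ => condProb_pos hp _ _ _)
      (fun _ => condProb_pos hp _ _ _) (fun v hv k => ?_) (funext fun k => ?_)
    · have hvB : v ∉ B := Finset.disjoint_left.1 hAB hv
      have hA' : A.erase v ⊆ A := Finset.erase_subset v A
      simp only [← Finset.update_piecewise_of_mem _ _ _ (Finset.mem_union_left P hv)]
      rw [sum_condProb_update hv hvB, sum_condProb_update hv hvB]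
      refine ih _ (Finset.erase_ssubset hv) (hAB.mono_left hA')
        (fun C hC => h C (hC.trans hA')) fun w hw => (hagree k w ?_).symm
      exact Finset.union_subset_union_left hA' hw
    · rw [contrast_comp_piecewise Finset.subset_union_left (fun k => Real.log (condProb p A B k)),
        ← mlContrast_eq_contrast hAB]
      exact h A subset_rfl hA fun v hv => (hagree k v hv).symm
  calc condProb p A B i = condProb p A B ((A ∪ P).piecewise i j) := congrFun hfreeze i
    _ = condProb p A B j := by
      congr 1
      funext v
      by_cases hv : v ∈ A ∪ P
      · rw [hagree i v hv, hij v hv]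
      · exact Finset.piecewise_eq_of_notMem _ _ _ hv

theorem sum_prod_condProb_inter_update {𝒞 : Finset (Finset V)}
    (h𝒞 : (𝒞 : Set (Finset V)).PairwiseDisjoint id) (hvA : v ∈ A) (hv𝒞 : v ∈ 𝒞.biUnion id)
    (hvB : v ∉ B) (i : Cell r) :
    ∑ x, ∏ C ∈ 𝒞, condProb p (A ∩ C) B (Function.update i v x) =
      ∏ C ∈ 𝒞, condProb p (A.erase v ∩ C) B i := by
  obtain ⟨C₀, hC₀, hvC₀ : v ∈ C₀⟩ := Finset.mem_biUnion.1 hv𝒞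
  have hother : ∀ C ∈ 𝒞.erase C₀, v ∉ C := fun C hC => Finset.disjoint_left.1
    (h𝒞 hC₀ (Finset.mem_of_mem_erase hC) (Finset.ne_of_mem_erase hC).symm) hvC₀
  have hfactor : ∀ x, ∏ C ∈ 𝒞, condProb p (A ∩ C) B (Function.update i v x) =
      condProb p (A ∩ C₀) B (Function.update i v x) *
        ∏ C ∈ 𝒞.erase C₀, condProb p (A.erase v ∩ C) B i := by
    intro x
    rw [← Finset.mul_prod_erase _ _ hC₀]
    refine congrArg _ (Finset.prod_congr rfl fun C hC => ?_)
    have hvAC : v ∉ A ∩ C := fun h => hother C hC (Finset.mem_inter.1 h).2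
    rw [condProb_update_of_notMem hvAC hvB, Finset.erase_inter, Finset.erase_eq_of_notMem hvAC]
  rw [Finset.sum_congr rfl fun x _ => hfactor x, ← Finset.sum_mul,
    sum_condProb_update (Finset.mem_inter.2 ⟨hvA, hvC₀⟩) hvB, ← Finset.erase_inter,
    Finset.mul_prod_erase _ (fun C => condProb p (A.erase v ∩ C) B i) hC₀]

theorem condProb_eq_prod_inter_of_mlContrast_eq_zero (hp : ∀ i, 0 < p i) (hAB : Disjoint A B)
    {𝒞 : Finset (Finset V)} (h𝒞 : (𝒞 : Set (Finset V)).PairwiseDisjoint id)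
    (hA𝒞 : A ⊆ 𝒞.biUnion id)
    (h : ∀ A' ⊆ A, A'.Nonempty → (∀ C ∈ 𝒞, ¬ A' ⊆ C) → mlContrast hr p A' B = 0) (i : Cell r) :
    condProb p A B i = ∏ C ∈ 𝒞, condProb p (A ∩ C) B i := by
  induction A using Finset.strongInduction generalizing i with
  | H A ih =>
  rcases A.eq_empty_or_nonempty with rfl | hA
  · simp only [Finset.empty_inter, condProb_empty hp, Finset.prod_const_one]
  by_cases hblock : ∃ C₀ ∈ 𝒞, A ⊆ C₀
  · obtain ⟨C₀, hC₀, hAC₀⟩ := hblock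
    rw [Finset.prod_eq_single_of_mem C₀ hC₀, Finset.inter_eq_left.2 hAC₀]
    intro C hC hne
    have hdisj : Disjoint A C := (h𝒞 hC₀ hC hne.symm).mono_left hAC₀
    rw [Finset.disjoint_iff_inter_eq_empty.1 hdisj, condProb_empty hp]
  push Not at hblock
  suffices hprod : condProb p A B = fun k => ∏ C ∈ 𝒞, condProb p (A ∩ C) B k from congrFun hprod i
  refine eq_of_contrast_log_eq (hr := hr) (A := A) (fun _ => condProb_pos hp _ _ _)
    (fun k => Finset.prod_pos fun C _ => condProb_pos hp (A ∩ C) B k) (fun v hv k => ?_) ?_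
  · have hvB : v ∉ B := Finset.disjoint_left.1 hAB hv
    have hA' : A.erase v ⊆ A := Finset.erase_subset v A
    rw [sum_condProb_update hv hvB, sum_prod_condProb_inter_update h𝒞 hv (hA𝒞 hv) hvB]
    exact ih _ (Finset.erase_ssubset hv) (hAB.mono_left hA') (hA'.trans hA𝒞)
      (fun D hD => h D (hD.trans hA')) k
  · rw [← mlContrast_eq_contrast hAB, h A subset_rfl hA hblock,
      contrast_log_prod_condProb_eq_zero hp hAB fun C hC hAC =>
        hblock C hC (hAC.trans Finset.inter_subset_right)]

end LogisticContrasts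

namespace MixedGraph

section Components

variable {V : Type*} [Fintype V] {G : MixedGraph V} {T : Finset V} {v w : V}

theorem mem_component : w ∈ G.component v ↔ G.sameComp v w := by simp [component]

theorem self_mem_component (G : MixedGraph V) (v : V) : v ∈ G.component v :=
  mem_component.2 .refl

theorem IsComponent.component_eq (hT : G.IsComponent T) (hw : w ∈ T) : G.component w = T := by
  obtain ⟨v, rfl⟩ := hT
  have hvw : G.sameComp v w := mem_component.1 hw
  have : Std.Symm G.undir := ⟨fun _ _ => G.undir_symm⟩
  have hwv : G.sameComp w v := Relation.ReflTransGen.stdSymm.symm _ _ hvw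
  ext x
  rw [mem_component, mem_component]
  exact ⟨hvw.trans, hwv.trans⟩

theorem IsComponent.not_dir (hT : G.IsComponent T) (hG : G.NoSemiDirectedCycle) (hw : w ∈ T)
    (hv : v ∈ T) : ¬ G.dir w v := fun hwv =>
  hG w v hwv <| Relation.ReflTransGen.mono (fun _ _ => Or.inr) _ _ <|
    mem_component.1 (hT.component_eq hv ▸ hw : w ∈ G.component v)

variable {ord : Finset V → Finset V → Prop}

theorem ConsistentOrder.disjoint_pre (hord : G.ConsistentOrder ord) (hT : G.IsComponent T) :
    Disjoint T (G.pre ord T) := by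
  refine Finset.disjoint_left.2 fun w hw hpre => hord.2.1 T hT ?_
  simpa [pre, hT.component_eq hw] using hpre

theorem ConsistentOrder.mem_pre_of_dir (hord : G.ConsistentOrder ord) (hG : G.NoSemiDirectedCycle)
    (hT : G.IsComponent T) (hv : v ∈ T) (hwv : G.dir w v) : w ∈ G.pre ord T := by
  have hw := G.self_mem_component w
  have hne : T ≠ G.component w := fun h => hT.not_dir hG (h ▸ hw) hv hwv
  have hcomp : G.IsComponent (G.component w) := ⟨w, rfl⟩
  have hle : ¬ ord (G.component w) T := fun h =>
    hord.2.2.2 _ _ hcomp hT h ⟨hcomp, hT, hne.symm, w, hw, v, hv, hwv⟩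
  simpa [pre] using (hord.1 T _ hT hcomp hne).resolve_right hle

end Components

section ConnectedComponents

/-- Two nodes are joined by an undirected path inside `A`: the relation in terms of which
`ConnectedIn` and `compIn` are defined. -/
def JoinedIn {V : Type*} (G : MixedGraph V) (A : Finset V) : V → V → Prop :=
  Relation.ReflTransGen fun x y => x ∈ A ∧ y ∈ A ∧ G.undir x y

variable {V : Type*} {G : MixedGraph V} {A A' C : Finset V} {v w : V}

theorem JoinedIn.symm (h : G.JoinedIn A v w) : G.JoinedIn A w v :=
  have : Std.Symm fun x y => x ∈ A ∧ y ∈ A ∧ G.undir x y :=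
    ⟨fun _ _ h => ⟨h.2.1, h.1, G.undir_symm h.2.2⟩⟩
  Relation.ReflTransGen.stdSymm.symm _ _ h

theorem JoinedIn.mono (hA : A' ⊆ A) (h : G.JoinedIn A' v w) : G.JoinedIn A v w :=
  Relation.ReflTransGen.mono (fun _ _ h => ⟨hA h.1, hA h.2.1, h.2.2⟩) _ _ h

theorem mem_compIn : w ∈ G.compIn A v ↔ w ∈ A ∧ G.JoinedIn A v w :=
  Finset.mem_filter

theorem compIn_eq_of_mem (h : w ∈ G.compIn A v) : G.compIn A w = G.compIn A v := by
  have hvw : G.JoinedIn A v w := (mem_compIn.1 h).2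
  ext x
  rw [mem_compIn, mem_compIn]
  exact and_congr_right fun _ => ⟨hvw.trans, hvw.symm.trans⟩

variable [DecidableEq V]

theorem biUnion_connComps (G : MixedGraph V) (A : Finset V) : (G.connComps A).biUnion id = A := by
  ext x
  rw [connComps, Finset.image_biUnion, Finset.mem_biUnion]
  constructor
  · rintro ⟨v, -, hx⟩
    exact (mem_compIn.1 hx).1
  · exact fun hx => ⟨x, hx, mem_compIn.2 ⟨hx, .refl⟩⟩

theorem pairwiseDisjoint_connComps (G : MixedGraph V) (A : Finset V) :
    (G.connComps A : Set (Finset V)).PairwiseDisjoint id := by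
  intro C hC D hD hne
  obtain ⟨v, -, rfl⟩ := Finset.mem_image.1 hC
  obtain ⟨w, -, rfl⟩ := Finset.mem_image.1 hD
  refine Finset.disjoint_left.2 fun x hxv hxw => hne ?_
  rw [← compIn_eq_of_mem hxv, compIn_eq_of_mem hxw]

theorem ConnectedIn.exists_connComps_superset (h : G.ConnectedIn A') (hA : A' ⊆ A) :
    ∃ C ∈ G.connComps A, A' ⊆ C := by
  obtain ⟨v, hv⟩ := h.1
  refine ⟨_, Finset.mem_image_of_mem _ (hA hv), fun w hw => mem_compIn.2 ⟨hA hw, ?_⟩⟩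
  exact JoinedIn.mono hA (h.2 v hv w hw)

theorem connectedIn_of_subset_connComp (hA : A.Nonempty) (hC : C ∈ G.connComps A) (hAC : A ⊆ C) :
    G.ConnectedIn A := by
  obtain ⟨v, -, rfl⟩ := Finset.mem_image.1 hC
  have hv : ∀ w ∈ A, G.JoinedIn A v w := fun w hw => (mem_compIn.1 (hAC hw)).2
  exact ⟨hA, fun a ha b hb => (hv a ha).symm.trans (hv b hb)⟩

end ConnectedComponents

section Parents

variable {V : Type*} [Fintype V] [DecidableEq V] {G : MixedGraph V} {A A' B T : Finset V}

theorem mem_paG {w : V} : w ∈ G.paG A ↔ w ∉ A ∧ ∃ v ∈ A, G.dir w v := by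
  simp [paG]

theorem paG_subset (hdir : ∀ v ∈ T, ∀ w, G.dir w v → w ∈ B) (hA : A ⊆ T) : G.paG A ⊆ B := by
  intro w hw
  obtain ⟨-, v, hv, hwv⟩ := mem_paG.1 hw
  exact hdir v (hA hv) w hwv

theorem paG_subset_paG (hA : A' ⊆ A) (hdisj : Disjoint A (G.paG A')) :
    G.paG A' ⊆ G.paG A := by
  intro w hw
  obtain ⟨-, v, hv, hwv⟩ := mem_paG.1 hw
  exact mem_paG.2 ⟨Finset.disjoint_right.1 hdisj hw, v, hA hv, hwv⟩

end Parents

end MixedGraph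

section BlockCharacterizations

variable {V : Type*} [Fintype V] [DecidableEq V] {r : V → ℕ} {hr : ∀ v, 2 ≤ r v}
  {G : MixedGraph V} {A B : Finset V} {p : Cell r → ℝ}

theorem mlContrast_eq_zero_of_condProb_eq_prod_connComps (hp : ∀ i, 0 < p i)
    (hAB : Disjoint A B) (hA : A.Nonempty) (hc : ¬ G.ConnectedIn A)
    (h : ∀ i, condProb p A B i = ∏ C ∈ G.connComps A, condProb p C B i) :
    mlContrast hr p A B = 0 :=
  mlContrast_eq_zero_of_condProb_eq_prod (C := id) hp hAB
    (fun _ hC hAC => hc (MixedGraph.connectedIn_of_subset_connComp hA hC hAC)) h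

theorem condProb_eq_prod_connComps_of_mlContrast_eq_zero (hp : ∀ i, 0 < p i)
    (hAB : Disjoint A B)
    (h : ∀ A' ⊆ A, A'.Nonempty → ¬ G.ConnectedIn A' → mlContrast hr p A' B = 0) (i : Cell r) :
    condProb p A B i = ∏ C ∈ G.connComps A, condProb p C B i := by
  have hunion := MixedGraph.biUnion_connComps G A
  have hprod := condProb_eq_prod_inter_of_mlContrast_eq_zero hp hAB
    (MixedGraph.pairwiseDisjoint_connComps G A) hunion.ge
    (fun A' hA' hne hsub => h A' hA' hne fun hc =>
      let ⟨C, hC, hA'C⟩ := hc.exists_connComps_superset hA'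
      hsub C hC hA'C) i
  rw [hprod]
  refine Finset.prod_congr rfl fun C hC => ?_
  have hCA : C ⊆ A := (Finset.subset_biUnion_of_mem id hC).trans hunion.le
  rw [Finset.inter_eq_right.2 hCA]

theorem condIndep_paG_of_dependsOn_mlContrast (hp : ∀ i, 0 < p i) (hAB : Disjoint A B)
    (hpa : ∀ A' ⊆ A, G.paG A' ⊆ B)
    (h : ∀ A' ⊆ A, A'.Nonempty → DependsOn (mlContrast hr p A' B) ↑(A' ∪ G.paG A')) :
    CondIndep p A (B \ G.paG A) (G.paG A) := by
  refine (condIndep_sdiff_iff_dependsOn_condProb hp (hpa A subset_rfl) hAB).2 ?_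
  refine dependsOn_condProb_of_dependsOn_mlContrast (hr := hr) hp hAB fun A' hA' hne => ?_
  have hsub : G.paG A' ⊆ G.paG A :=
    MixedGraph.paG_subset_paG hA' (hAB.mono_right (hpa A' hA'))
  exact (h A' hA' hne).mono (Finset.coe_subset.2 (Finset.union_subset_union_right hsub))

end BlockCharacterizations

theorem mr_markov_iff_mlContrast_general
    {V : Type*} [Fintype V] [DecidableEq V] {r : V → ℕ} (hr : ∀ v, 2 ≤ r v)
    (G : MixedGraph V) {T B : Finset V} (hTB : Disjoint T B)
    (hdir : ∀ v ∈ T, ∀ w, G.dir w v → w ∈ B)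
    {p : Cell r → ℝ} (hp : ∀ i, 0 < p i) :
    (∀ A ⊆ T, A.Nonempty →
      (G.ConnectedIn A → CondIndep p A (B \ G.paG A) (G.paG A)) ∧
      (¬ G.ConnectedIn A →
        ∀ i : Cell r, condProb p A B i = ∏ Aj ∈ G.connComps A, condProb p Aj B i)) ↔
      ∀ A ⊆ T, A.Nonempty →
        (G.ConnectedIn A →
          ∀ i j : Cell r, (∀ v ∈ A, (i v : ℕ) ≠ 0) →
            (∀ v ∈ A, i v = j v) → (∀ v ∈ G.paG A, i v = j v) →
            mlContrast hr p A B i = mlContrast hr p A B j) ∧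
        (¬ G.ConnectedIn A →
          ∀ i : Cell r, (∀ v ∈ A, (i v : ℕ) ≠ 0) → mlContrast hr p A B i = 0) := by
  have hpa : ∀ A ⊆ T, G.paG A ⊆ B := fun A hA => MixedGraph.paG_subset hdir hA
  have hdisj : ∀ A ⊆ T, Disjoint A B := fun A hA => hTB.mono_left hA
  constructor
  · refine fun h A hA hne => ⟨fun hc => ?_, fun hc i _ => ?_⟩
    · have hdep := (condIndep_sdiff_iff_dependsOn_condProb hp (hpa A hA) (hdisj A hA)).1
        ((h A hA hne).1 hc)
      exact (dependsOn_mlContrast_iff (hdisj A hA)).1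
        (dependsOn_mlContrast_of_dependsOn_condProb hdep)
    · exact congrFun (mlContrast_eq_zero_of_condProb_eq_prod_connComps hp (hdisj A hA) hne hc
        ((h A hA hne).2 hc)) i
  · intro h
    have hzero : ∀ A ⊆ T, A.Nonempty → ¬ G.ConnectedIn A → mlContrast hr p A B = 0 :=
      fun A hA hne hc => (mlContrast_eq_zero_iff (hdisj A hA)).2 ((h A hA hne).2 hc)
    have hdep : ∀ A ⊆ T, A.Nonempty → DependsOn (mlContrast hr p A B) ↑(A ∪ G.paG A) := by
      intro A hA hne
      by_cases hc : G.ConnectedIn A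
      · exact (dependsOn_mlContrast_iff (hdisj A hA)).2 ((h A hA hne).1 hc)
      · simp only [hzero A hA hne hc, DependsOn, Pi.zero_apply, implies_true]
    exact fun A hA _ =>
      ⟨fun _ => condIndep_paG_of_dependsOn_mlContrast hp (hdisj A hA)
        (fun A' hA' => hpa A' (hA'.trans hA)) fun A' hA' => hdep A' (hA'.trans hA),
      fun _ => condProb_eq_prod_connComps_of_mlContrast_eq_zero hp (hdisj A hA)
        fun A' hA' => hzero A' (hA'.trans hA)⟩

/-- Theorem 2: a strictly positive joint pmf obeys the
multivariate regression Markov property for `G` iff for every chain component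
`T` and nonempty `A ⊆ T`: (i) if `A` is connected, the conditional
multivariate logistic contrast `η^{(A)}(i*_A | i_{pre(T)})` depends on
`i_{pre(T)}` only through `i_{pa_G(A)}`; (ii) if `A` is disconnected,
`η^{(A)}(i*_A | i_{pre(T)}) = 0`. -/
theorem mr_markov_iff_mlContrast
    {V : Type*} [Fintype V] [DecidableEq V] {r : V → ℕ} (hr : ∀ v, 2 ≤ r v)
    (G : MixedGraph V) (hG : G.NoSemiDirectedCycle)
    (ord : Finset V → Finset V → Prop) (hord : G.ConsistentOrder ord)
    (p : Cell r → ℝ) (hp : IsPosPMF p) :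
    MRMarkov G ord p ↔
      ∀ T : Finset V, G.IsComponent T → ∀ A ⊆ T, A.Nonempty →
        (G.ConnectedIn A →
          ∀ i j : Cell r, (∀ v ∈ A, (i v : ℕ) ≠ 0) →
            (∀ v ∈ A, i v = j v) → (∀ v ∈ G.paG A, i v = j v) →
            mlContrast hr p A (G.pre ord T) i =
              mlContrast hr p A (G.pre ord T) j) ∧
        (¬ G.ConnectedIn A →
          ∀ i : Cell r, (∀ v ∈ A, (i v : ℕ) ≠ 0) →
            mlContrast hr p A (G.pre ord T) i = 0) := by
  exact forall₂_congr fun T hT => mr_markov_iff_mlContrast_general hr G (hord.disjoint_pre hT)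
    (fun v hv w hwv => hord.mem_pre_of_dir hG hT hv hwv) hp.1
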